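/- arXiv:1301.5956 — 3 statements merged into one kernel-verified Lean document; each statement's English description precedes it below -/
import Mathlib

section
/- The momentum uncertainty of the semiclassical wave packet φ₀ satisfies Δp = √(ħ/2)·|B|; concretely, ∫_ℝ |−iħφ₀′(x) − ηφ₀(x)|² dx = (ħ/2)|B|², where φ₀′ denotes the derivative of φ₀. -/
/-!
The Gaussian form of the wave packet turns the centred momentum operator into multiplication:
`(p - η) φ₀ = i (B / A) (x - a) φ₀`. The position density `|φ₀|²` is that of a normal distribution
with mean `a` and variance `ħ / (2 Re (B / A)) = ħ |A|² / 2`, whence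
`(Δp)² = |B / A|² · ħ |A|² / 2 = ħ |B|² / 2`.
-/

open MeasureTheory Complex Real

open ProbabilityTheory

theorem integral_sub_sq_mul_gaussianPDFReal (μ : ℝ) {v : NNReal} (hv : v ≠ 0) :
    ∫ x, (x - μ) ^ 2 * gaussianPDFReal μ v x = v := by
  have h := variance_fun_id_gaussianReal (μ := μ) (v := v)
  rw [variance_eq_integral aemeasurable_id', integral_id_gaussianReal,
    integral_gaussianReal_eq_integral_smul hv] at h
  simpa only [smul_eq_mul, mul_comm] using h

theorem rpow_neg_one_fourth_sq {r : ℝ} (hr : 0 ≤ r) : (r ^ (-(1 / 4 : ℝ))) ^ 2 = (√r)⁻¹ := by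
  rw [← Real.rpow_mul_natCast hr, Real.sqrt_eq_rpow, ← Real.rpow_neg hr]
  norm_num

theorem norm_rpow_neg_one_fourth_mul_sq {r s : ℝ} (hr : 0 ≤ r) (hs : 0 ≤ s) (c : ℂ) :
    ‖((r ^ (-(1 / 4 : ℝ)) : ℝ) : ℂ) * (s ^ (-(1 / 4 : ℝ)) : ℝ) * c‖ ^ 2 =
      (√(r * s))⁻¹ * ‖c‖ ^ 2 := by
  rw [← ofReal_mul, ← Real.mul_rpow hr hs, norm_mul, norm_real, mul_pow, Real.norm_eq_abs, sq_abs,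
    rpow_neg_one_fourth_sq (mul_nonneg hr hs)]

theorem conj_mul_add_conj_mul_eq (z w : ℂ) :
    (starRingEnd ℂ) w * z + (starRingEnd ℂ) z * w = ((2 * (‖w‖ ^ 2 * (z / w).re) : ℝ) : ℂ) := by
  have hre : ‖w‖ ^ 2 * (z / w).re = ((starRingEnd ℂ) w * z).re := by
    obtain rfl | hw := eq_or_ne w 0
    · simp
    · rw [← normSq_eq_norm_sq, ← re_ofReal_mul, normSq_eq_conj_mul_self, mul_assoc,
        mul_div_cancel₀ z hw]
  rw [hre, ← add_conj, map_mul, conj_conj, mul_comm w]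

/-- The Gaussian wave packet `x ↦ N exp (-Γ (x - a)² / (2ħ) + i η (x - a) / ħ)`, with mean position
`a`, mean momentum `η` and complex width `Γ`; the prefactor `N` is not assumed to normalize it. -/
noncomputable def gaussianPacket (N Γ : ℂ) (hbar a η x : ℝ) : ℂ :=
  N * cexp (-Γ * ((x : ℂ) - a) ^ 2 / (2 * hbar) + I * η * ((x : ℂ) - a) / hbar)

namespace gaussianPacket

variable (N Γ : ℂ) (hbar a η : ℝ)

theorem hasDerivAt (x : ℝ) :
    HasDerivAt (gaussianPacket N Γ hbar a η)
      ((-Γ * ((x : ℂ) - a) / hbar + I * η / hbar) * gaussianPacket N Γ hbar a η x) x := by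
  have hlin : HasDerivAt (fun x : ℝ ↦ (x : ℂ) - a) 1 x := (ofRealCLM.hasDerivAt).sub_const _
  have hexponent :=
    (((hlin.pow 2).const_mul (-Γ)).div_const (2 * hbar : ℂ)).add
      ((hlin.const_mul (I * η)).div_const (hbar : ℂ))
  refine (hexponent.cexp.const_mul N).congr_deriv ?_
  simp only [gaussianPacket, Pi.add_apply, Pi.pow_apply]
  ring

theorem norm_sq (x : ℝ) :
    ‖gaussianPacket N Γ hbar a η x‖ ^ 2 = ‖N‖ ^ 2 * rexp (-Γ.re * (x - a) ^ 2 / hbar) := by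
  have hre : (-Γ * ((x : ℂ) - a) ^ 2 / (2 * hbar) + I * η * ((x : ℂ) - a) / hbar).re =
      -Γ.re * (x - a) ^ 2 / (2 * hbar) := by
    have hsplit : -Γ * ((x : ℂ) - a) ^ 2 / (2 * hbar) + I * η * ((x : ℂ) - a) / hbar =
        ((-(x - a) ^ 2 / (2 * hbar) : ℝ) : ℂ) * Γ + ((η * (x - a) / hbar : ℝ) : ℂ) * I := by
      push_cast
      ring
    rw [hsplit, add_re, re_ofReal_mul, re_ofReal_mul, I_re]
    ring
  rw [gaussianPacket, norm_mul, norm_exp, hre, mul_pow, ← Real.exp_nat_mul]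
  congr 2
  push_cast
  ring

variable {Γ hbar}

theorem norm_sq_eq_mul_gaussianPDFReal (hhbar : 0 < hbar) (hΓ : 0 < Γ.re) (x : ℝ) :
    ‖gaussianPacket N Γ hbar a η x‖ ^ 2 =
      ‖N‖ ^ 2 * √(π * hbar / Γ.re) * gaussianPDFReal a (hbar / (2 * Γ.re)).toNNReal x := by
  have hvar : 2 * π * (hbar / (2 * Γ.re)) = π * hbar / Γ.re := by field_simp
  have hsqrt : √(π * hbar / Γ.re) ≠ 0 := by positivity
  have hexponent : -(x - a) ^ 2 / (2 * (hbar / (2 * Γ.re))) = -Γ.re * (x - a) ^ 2 / hbar := by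
    field_simp
  rw [norm_sq, gaussianPDFReal, Real.coe_toNNReal _ (by positivity), hvar, hexponent, mul_assoc,
    mul_inv_cancel_left₀ hsqrt]

theorem integral_norm_sq (hhbar : 0 < hbar) (hΓ : 0 < Γ.re) :
    ∫ x, ‖gaussianPacket N Γ hbar a η x‖ ^ 2 = ‖N‖ ^ 2 * √(π * hbar / Γ.re) := by
  have hv : (hbar / (2 * Γ.re)).toNNReal ≠ 0 := (Real.toNNReal_pos.2 (by positivity)).ne'
  simp only [norm_sq_eq_mul_gaussianPDFReal N a η hhbar hΓ]
  rw [integral_const_mul, integral_gaussianPDFReal_eq_one a hv, mul_one]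

theorem integral_sub_sq_mul_norm_sq (hhbar : 0 < hbar) (hΓ : 0 < Γ.re) :
    ∫ x, (x - a) ^ 2 * ‖gaussianPacket N Γ hbar a η x‖ ^ 2 =
      hbar / (2 * Γ.re) * ∫ x, ‖gaussianPacket N Γ hbar a η x‖ ^ 2 := by
  have hv : (hbar / (2 * Γ.re)).toNNReal ≠ 0 := (Real.toNNReal_pos.2 (by positivity)).ne'
  rw [integral_norm_sq N a η hhbar hΓ]
  simp only [norm_sq_eq_mul_gaussianPDFReal N a η hhbar hΓ, mul_left_comm ((_ : ℝ) ^ 2)]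
  rw [integral_const_mul, integral_sub_sq_mul_gaussianPDFReal a hv,
    Real.coe_toNNReal _ (by positivity), mul_comm]

theorem momentum_sub_eq_mul (hhbar : hbar ≠ 0) (x : ℝ) :
    -I * hbar * deriv (gaussianPacket N Γ hbar a η) x - η * gaussianPacket N Γ hbar a η x =
      I * Γ * ((x - a : ℝ) : ℂ) * gaussianPacket N Γ hbar a η x := by
  have hhbar' : (hbar : ℂ) ≠ 0 := ofReal_ne_zero.2 hhbar
  rw [(hasDerivAt N Γ hbar a η x).deriv]
  push_cast
  field_simp
  linear_combination -(η * gaussianPacket N Γ hbar a η x) * I_sq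

theorem integral_norm_momentum_sub_sq (hhbar : 0 < hbar) (hΓ : 0 < Γ.re) :
    ∫ x : ℝ, ‖-I * hbar * deriv (gaussianPacket N Γ hbar a η) x -
        η * gaussianPacket N Γ hbar a η x‖ ^ 2 =
      hbar / 2 * (‖Γ‖ ^ 2 / Γ.re) * ∫ x, ‖gaussianPacket N Γ hbar a η x‖ ^ 2 := by
  have hpointwise (x : ℝ) : ‖-I * hbar * deriv (gaussianPacket N Γ hbar a η) x -
      η * gaussianPacket N Γ hbar a η x‖ ^ 2 =
        ‖Γ‖ ^ 2 * ((x - a) ^ 2 * ‖gaussianPacket N Γ hbar a η x‖ ^ 2) := by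
    rw [momentum_sub_eq_mul N a η hhbar.ne', norm_mul, norm_mul, norm_mul, norm_I, norm_real,
      mul_pow, mul_pow, one_mul, Real.norm_eq_abs, sq_abs, mul_assoc]
  simp only [hpointwise]
  rw [integral_const_mul, integral_sub_sq_mul_norm_sq N a η hhbar hΓ]
  ring

end gaussianPacket

/-- The momentum uncertainty of the semiclassical wave packet `φ₀` satisfies
`Δp = √(ħ/2)·|B|`; concretely, `∫ |−iħφ₀′(x) − ηφ₀(x)|² dx = (ħ/2)|B|²`. -/
theorem stmt_2 (hbar a η : ℝ) (hhbar : 0 < hbar) (A B c : ℂ)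
    (hAB : (starRingEnd ℂ) A * B + (starRingEnd ℂ) B * A = 2)
    (hc : c ^ 2 = A⁻¹) (φ : ℝ → ℂ)
    (hφ : ∀ x : ℝ, φ x =
      (Real.pi ^ (-(1/4 : ℝ)) : ℝ) * (hbar ^ (-(1/4 : ℝ)) : ℝ) * c *
        Complex.exp (-B * ((x : ℂ) - a) ^ 2 / (2 * A * hbar) +
          Complex.I * η * ((x : ℂ) - a) / hbar)) :
    ∫ x : ℝ, ‖-Complex.I * hbar * deriv φ x - η * φ x‖ ^ 2 =
      hbar / 2 * ‖B‖ ^ 2 := by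
  have hA : A ≠ 0 := by
    rintro rfl
    simp at hAB
  have hre : (B / A).re = (‖A‖ ^ 2)⁻¹ := by
    rw [conj_mul_add_conj_mul_eq B A, ← ofReal_ofNat, ofReal_inj] at hAB
    exact eq_inv_of_mul_eq_one_right (by linarith)
  have hre_pos : 0 < (B / A).re := by rw [hre]; positivity
  set N : ℂ := (π ^ (-(1/4 : ℝ)) : ℝ) * (hbar ^ (-(1/4 : ℝ)) : ℝ) * c with hN
  obtain rfl : φ = gaussianPacket N (B / A) hbar a η := by
    funext x
    rw [hφ, gaussianPacket]
    ring_nf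
  have hnormalized : ∫ x, ‖gaussianPacket N (B / A) hbar a η x‖ ^ 2 = 1 := by
    rw [gaussianPacket.integral_norm_sq N a η hhbar hre_pos, hN,
      norm_rpow_neg_one_fourth_mul_sq pi_pos.le hhbar.le, ← norm_pow, hc, norm_inv, hre,
      div_inv_eq_mul, Real.sqrt_mul (by positivity) (‖A‖ ^ 2), Real.sqrt_sq (norm_nonneg A)]
    field
  rw [gaussianPacket.integral_norm_momentum_sub_sq N a η hhbar hre_pos, hnormalized, hre, norm_div]
  field
end

section
/- In the state φ₀, the usual position–momentum uncertainty product equals (ħ/2)|A||B|; concretely, √(∫_ℝ (x−a)²|φ₀(x)|² dx) · √(∫_ℝ |−iħφ₀′(x) − ηφ₀(x)|² dx) = (ħ/2)|A||B|. -/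
open MeasureTheory Complex Real

/-!
A Gaussian wave packet `ψ(x) = N exp (-w (x - a)² / (2ħ) + iη (x - a) / ħ)` has as position density
`|ψ|²` a multiple of the normal density with mean `a` and variance `ħ / (2 Re w)`. Differentiating
the exponential gives `(p - η) ψ = i w (x - a) ψ`, so the momentum spread is `|w|` times the
position spread and the uncertainty product is `ħ |w| / (2 Re w) · ‖ψ‖²`. For `w = B / A` the
relation `Re (Ā B) = 1` says that `Re w = 1 / |A|²`, and `|c|² = 1 / |A|` then makes `‖ψ‖² = 1`.
-/

section GaussianWavePacket

open ProbabilityTheory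
open scoped NNReal

lemma integral_sq_sub_mul_gaussianPDFReal (μ : ℝ) {v : ℝ≥0} (hv : v ≠ 0) :
    ∫ x : ℝ, (x - μ) ^ 2 * gaussianPDFReal μ v x = v := by
  calc ∫ x : ℝ, (x - μ) ^ 2 * gaussianPDFReal μ v x
      = ∫ x : ℝ, (x - μ) ^ 2 ∂gaussianReal μ v := by
        simp only [integral_gaussianReal_eq_integral_smul hv, smul_eq_mul, mul_comm]
    _ = Var[fun x ↦ x; gaussianReal μ v] := by
        rw [variance_eq_integral measurable_id'.aemeasurable, integral_id_gaussianReal]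
    _ = v := variance_fun_id_gaussianReal

/-- The semiclassical Gaussian wave packet centred at position `a` and momentum `η`, with amplitude
`N` and complex width parameter `w`; Hagedorn's parametrisation by `A` and `B` has `w = B / A`.
No normalisation is built in, and the packet decays only if `0 < w.re`. -/
noncomputable def gaussianWavePacket (hbar a η : ℝ) (N w : ℂ) (x : ℝ) : ℂ :=
  N * cexp (-w * ((x : ℂ) - a) ^ 2 / (2 * hbar) + I * η * ((x : ℂ) - a) / hbar)

variable {hbar : ℝ} (a η : ℝ) (N : ℂ) {w : ℂ}

lemma norm_sq_gaussianWavePacket (hbar : ℝ) (w : ℂ) (x : ℝ) :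
    ‖gaussianWavePacket hbar a η N w x‖ ^ 2 =
      ‖N‖ ^ 2 * rexp (-(w.re * (x - a) ^ 2 / hbar)) := by
  have hexponent : -w * ((x : ℂ) - a) ^ 2 / (2 * hbar) + I * η * ((x : ℂ) - a) / hbar =
      ((-(x - a) ^ 2 / (2 * hbar) : ℝ) : ℂ) * w + ((η * (x - a) / hbar : ℝ) : ℂ) * I := by
    push_cast
    ring
  rw [gaussianWavePacket, hexponent, norm_mul, norm_exp, mul_pow, ← Real.exp_nat_mul, add_re,
    re_ofReal_mul, re_ofReal_mul, I_re]
  congr 2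
  push_cast
  ring

lemma norm_sq_gaussianWavePacket_eq_mul_gaussianPDFReal (hhbar : 0 < hbar) (hw : 0 < w.re)
    (x : ℝ) :
    ‖gaussianWavePacket hbar a η N w x‖ ^ 2 =
      ‖N‖ ^ 2 * √(π * hbar / w.re) *
        gaussianPDFReal a (hbar / (2 * w.re)).toNNReal x := by
  have hvar : 2 * π * (hbar / (2 * w.re)) = π * hbar / w.re := by field_simp
  have hsqrt : √(π * hbar / w.re) ≠ 0 := by positivity
  rw [norm_sq_gaussianWavePacket, gaussianPDFReal, Real.coe_toNNReal _ (by positivity), hvar,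
    mul_assoc, mul_inv_cancel_left₀ hsqrt]
  congr 2
  field_simp

lemma integral_norm_sq_gaussianWavePacket (hhbar : 0 < hbar) (hw : 0 < w.re) :
    ∫ x : ℝ, ‖gaussianWavePacket hbar a η N w x‖ ^ 2 = ‖N‖ ^ 2 * √(π * hbar / w.re) := by
  have hv : (hbar / (2 * w.re)).toNNReal ≠ 0 := (Real.toNNReal_pos.2 (by positivity)).ne'
  simp only [norm_sq_gaussianWavePacket_eq_mul_gaussianPDFReal a η N hhbar hw]
  rw [integral_const_mul, integral_gaussianPDFReal_eq_one a hv, mul_one]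

lemma integral_sq_sub_mul_norm_sq_gaussianWavePacket (hhbar : 0 < hbar) (hw : 0 < w.re) :
    ∫ x : ℝ, (x - a) ^ 2 * ‖gaussianWavePacket hbar a η N w x‖ ^ 2 =
      hbar / (2 * w.re) * ∫ x : ℝ, ‖gaussianWavePacket hbar a η N w x‖ ^ 2 := by
  have hv : (hbar / (2 * w.re)).toNNReal ≠ 0 := (Real.toNNReal_pos.2 (by positivity)).ne'
  rw [integral_norm_sq_gaussianWavePacket a η N hhbar hw]
  simp only [norm_sq_gaussianWavePacket_eq_mul_gaussianPDFReal a η N hhbar hw,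
    mul_left_comm (_ ^ 2) (‖N‖ ^ 2 * _)]
  rw [integral_const_mul, integral_sq_sub_mul_gaussianPDFReal a hv,
    Real.coe_toNNReal _ (by positivity), mul_comm]

lemma hasDerivAt_gaussianWavePacket (hbar : ℝ) (w : ℂ) (x : ℝ) :
    HasDerivAt (gaussianWavePacket hbar a η N w)
      ((-w * ((x : ℂ) - a) / hbar + I * η / hbar) * gaussianWavePacket hbar a η N w x) x := by
  have hsub : HasDerivAt (fun y : ℝ ↦ (y : ℂ) - a) 1 x :=
    (hasDerivAt_id x).ofReal_comp.sub_const (a : ℂ)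
  have hquadratic := ((hsub.fun_pow 2).const_mul (-w)).div_const (2 * hbar : ℂ)
  have hlinear := (hsub.const_mul (I * η)).div_const (hbar : ℂ)
  refine ((hquadratic.fun_add hlinear).cexp.const_mul N).congr_deriv ?_
  rw [gaussianWavePacket]
  ring

lemma momentum_sub_gaussianWavePacket (hhbar : hbar ≠ 0) (w : ℂ) (x : ℝ) :
    -I * hbar * deriv (gaussianWavePacket hbar a η N w) x - η * gaussianWavePacket hbar a η N w x =
      I * w * ((x - a : ℝ) : ℂ) * gaussianWavePacket hbar a η N w x := by
  have hhbar' : (hbar : ℂ) ≠ 0 := ofReal_ne_zero.2 hhbar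
  rw [(hasDerivAt_gaussianWavePacket a η N hbar w x).deriv]
  push_cast
  field_simp
  linear_combination (-η * gaussianWavePacket hbar a η N w x) * I_sq

lemma integral_norm_sq_momentum_sub_gaussianWavePacket (hhbar : hbar ≠ 0) (w : ℂ) :
    ∫ x : ℝ, ‖-I * hbar * deriv (gaussianWavePacket hbar a η N w) x -
        η * gaussianWavePacket hbar a η N w x‖ ^ 2 =
      ‖w‖ ^ 2 * ∫ x : ℝ, (x - a) ^ 2 * ‖gaussianWavePacket hbar a η N w x‖ ^ 2 := by
  rw [← integral_const_mul]
  congr with x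
  rw [momentum_sub_gaussianWavePacket a η N hhbar]
  simp only [norm_mul, norm_I, one_mul, norm_real, mul_pow, Real.norm_eq_abs, sq_abs, mul_assoc]

theorem uncertainty_product_gaussianWavePacket (hhbar : 0 < hbar) (hw : 0 < w.re) :
    √(∫ x : ℝ, (x - a) ^ 2 * ‖gaussianWavePacket hbar a η N w x‖ ^ 2) *
      √(∫ x : ℝ, ‖-I * hbar * deriv (gaussianWavePacket hbar a η N w) x -
        η * gaussianWavePacket hbar a η N w x‖ ^ 2) =
      hbar / 2 * (‖w‖ / w.re) * ∫ x : ℝ, ‖gaussianWavePacket hbar a η N w x‖ ^ 2 := by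
  have hspread : 0 ≤ ∫ x : ℝ, (x - a) ^ 2 * ‖gaussianWavePacket hbar a η N w x‖ ^ 2 :=
    integral_nonneg fun x ↦ by positivity
  rw [integral_norm_sq_momentum_sub_gaussianWavePacket a η N hhbar.ne',
    Real.sqrt_mul (by positivity), Real.sqrt_sq (norm_nonneg w), mul_left_comm,
    Real.mul_self_sqrt hspread, integral_sq_sub_mul_norm_sq_gaussianWavePacket a η N hhbar hw]
  ring

end GaussianWavePacket

section Normalisation

variable {A B c : ℂ}

lemma re_div_eq_re_conj_mul_div_norm_sq (z w : ℂ) :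
    (w / z).re = ((starRingEnd ℂ) z * w).re / ‖z‖ ^ 2 := by
  rw [div_re, mul_re, conj_re, conj_im, normSq_eq_norm_sq]
  ring

lemma re_conj_mul_eq_one (hAB : (starRingEnd ℂ) A * B + (starRingEnd ℂ) B * A = 2) :
    ((starRingEnd ℂ) A * B).re = 1 := by
  have hre := congrArg re hAB
  simp only [add_re, mul_re, conj_re, conj_im, re_ofNat] at hre ⊢
  linarith

lemma rpow_neg_quarter_sq {t : ℝ} (ht : 0 ≤ t) : (t ^ (-(1 / 4 : ℝ))) ^ 2 = (√t)⁻¹ := by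
  rw [← Real.rpow_mul_natCast ht, Real.sqrt_eq_rpow, ← Real.rpow_neg ht]
  norm_num

lemma norm_sq_hagedorn_amplitude {hbar : ℝ} (hhbar : 0 ≤ hbar) (hc : c ^ 2 = A⁻¹) :
    ‖((π ^ (-(1 / 4 : ℝ)) : ℝ) : ℂ) * (hbar ^ (-(1 / 4 : ℝ)) : ℝ) * c‖ ^ 2 =
      (√(π * hbar) * ‖A‖)⁻¹ := by
  have hc_norm : ‖c‖ ^ 2 = ‖A‖⁻¹ := by rw [← norm_pow, hc, norm_inv]
  simp only [norm_mul, norm_real, Real.norm_eq_abs, mul_pow, sq_abs, hc_norm,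
    rpow_neg_quarter_sq pi_pos.le, rpow_neg_quarter_sq hhbar, Real.sqrt_mul pi_pos.le, mul_inv]

end Normalisation

/-- In the state `φ₀`, the usual position–momentum uncertainty product equals
`(ħ/2)|A||B|`. -/
theorem stmt_3 (hbar a η : ℝ) (hhbar : 0 < hbar) (A B c : ℂ)
    (hAB : (starRingEnd ℂ) A * B + (starRingEnd ℂ) B * A = 2)
    (hc : c ^ 2 = A⁻¹) (φ : ℝ → ℂ)
    (hφ : ∀ x : ℝ, φ x =
      (Real.pi ^ (-(1/4 : ℝ)) : ℝ) * (hbar ^ (-(1/4 : ℝ)) : ℝ) * c *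
        Complex.exp (-B * ((x : ℂ) - a) ^ 2 / (2 * A * hbar) +
          Complex.I * η * ((x : ℂ) - a) / hbar)) :
    Real.sqrt (∫ x : ℝ, (x - a) ^ 2 * ‖φ x‖ ^ 2) *
      Real.sqrt (∫ x : ℝ, ‖-Complex.I * hbar * deriv φ x - η * φ x‖ ^ 2) =
      hbar / 2 * ‖A‖ * ‖B‖ := by
  have hA : 0 < ‖A‖ := norm_pos_iff.2 (by rintro rfl; simp at hAB)
  have hre : (B / A).re = 1 / ‖A‖ ^ 2 := by
    rw [re_div_eq_re_conj_mul_div_norm_sq, re_conj_mul_eq_one hAB]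
  have hre_pos : 0 < (B / A).re := hre ▸ by positivity
  set N : ℂ := (π ^ (-(1 / 4 : ℝ)) : ℝ) * (hbar ^ (-(1 / 4 : ℝ)) : ℝ) * c with hN
  obtain rfl : φ = gaussianWavePacket hbar a η N (B / A) := by
    funext x
    rw [hφ, gaussianWavePacket]
    congr 2
    ring
  have hnormalised : ∫ x : ℝ, ‖gaussianWavePacket hbar a η N (B / A) x‖ ^ 2 = 1 := by
    rw [integral_norm_sq_gaussianWavePacket a η N hhbar hre_pos, hN,
      norm_sq_hagedorn_amplitude hhbar.le hc, hre, div_div_eq_mul_div, div_one,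
      Real.sqrt_mul (mul_pos pi_pos hhbar).le, Real.sqrt_sq hA.le,
      inv_mul_cancel₀ (by positivity)]
  rw [uncertainty_product_gaussianWavePacket a η N hhbar hre_pos, hnormalised, hre, norm_div]
  field_simp
end

section
/- The lowering operator annihilates φ₀: for every x ∈ ℝ, B·(x−a)·φ₀(x) + iA·(−iħφ₀′(x) − ηφ₀(x)) = 0. -/
open MeasureTheory Complex Real

/-!
The packet is a constant times `exp` of a quadratic phase, so its logarithmic derivative is the
derivative of the phase, `-B (x - a) / (A ħ) + i η / ħ`. The lowering operator is `A ħ` times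
the difference between `d / dx` and multiplication by that affine function.
-/

/-- The first-order operator `B (x - a) + i A (p - η)` with `p = -i ħ d / dx`: the lowering operator
of the packet with parameters `A`, `B`, centre `a` and momentum `η`, without its normalizing
factor `(2 ħ)^(-1/2)`, which does not affect the kernel. -/
noncomputable def loweringOperator (hbar a η A B : ℂ) (ψ : ℝ → ℂ) (x : ℝ) : ℂ :=
  B * (x - a) * ψ x + I * A * (-I * hbar * deriv ψ x - η * ψ x)

/-- The complex phase of the wave packet, in the convention that the packet is a multiple
of `exp (packetPhase …)`; it is defined on `ℂ` so that it can be differentiated as a polynomial. -/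
noncomputable def packetPhase (hbar a η A B z : ℂ) : ℂ :=
  -B * (z - a) ^ 2 / (2 * A * hbar) + I * η * (z - a) / hbar

/-- The derivative of the phase, that is, the logarithmic derivative of the wave packet. -/
noncomputable def packetPhaseDeriv (hbar a η A B z : ℂ) : ℂ :=
  -B * (z - a) / (A * hbar) + I * η / hbar

/-- The Gaussian wave packet on the real line with an arbitrary prefactor `C`, which
is `π^(-1/4) ħ^(-1/4) A^(-1/2)` for the normalized packet `φ₀`. -/
noncomputable def wavePacket (hbar a η A B C : ℂ) (x : ℝ) : ℂ :=
  C * Complex.exp (packetPhase hbar a η A B x)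

section

variable (hbar a η A B : ℂ)

theorem hasDerivAt_packetPhase (z : ℂ) :
    HasDerivAt (packetPhase hbar a η A B) (packetPhaseDeriv hbar a η A B z) z := by
  have hsub : HasDerivAt (fun w : ℂ ↦ w - a) 1 z := (hasDerivAt_id z).sub_const a
  have hquadratic : HasDerivAt (fun w : ℂ ↦ -B * (w - a) ^ 2 / (2 * A * hbar))
      (-B * (z - a) / (A * hbar)) z := by
    refine (((hsub.fun_pow 2).const_mul (-B)).div_const (2 * A * hbar)).congr_deriv ?_
    rw [← mul_div_mul_left _ (A * hbar) (two_ne_zero (α := ℂ))]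
    ring
  have hlinear : HasDerivAt (fun w : ℂ ↦ I * η * (w - a) / hbar) (I * η / hbar) z := by
    simpa only [mul_one] using (hsub.const_mul (I * η)).div_const hbar
  exact hquadratic.add hlinear

theorem hasDerivAt_wavePacket (C : ℂ) (x : ℝ) :
    HasDerivAt (wavePacket hbar a η A B C)
      (packetPhaseDeriv hbar a η A B x * wavePacket hbar a η A B C x) x := by
  refine ((hasDerivAt_packetPhase hbar a η A B x).cexp.const_mul C).comp_ofReal.congr_deriv ?_
  rw [wavePacket]
  ring

variable {hbar A}

theorem loweringOperator_eq_mul_deriv_sub (hhbar : hbar ≠ 0) (hA : A ≠ 0) (ψ : ℝ → ℂ) (x : ℝ) :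
    loweringOperator hbar a η A B ψ x =
      A * hbar * (deriv ψ x - packetPhaseDeriv hbar a η A B x * ψ x) := by
  have hphase : A * hbar * packetPhaseDeriv hbar a η A B x = -B * (x - a) + I * η * A := by
    rw [packetPhaseDeriv]
    field_simp
  rw [loweringOperator]
  linear_combination ψ x * hphase - A * hbar * deriv ψ x * I_mul_I

theorem stmt_4_general (hhbar : hbar ≠ 0) (hA : A ≠ 0) (C : ℂ) (x : ℝ) :
    loweringOperator hbar a η A B (wavePacket hbar a η A B C) x = 0 := by
  rw [loweringOperator_eq_mul_deriv_sub a η B hhbar hA,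
    (hasDerivAt_wavePacket hbar a η A B C x).deriv, sub_self, mul_zero]

end

/-- The lowering operator annihilates `φ₀`: for every `x ∈ ℝ`,
`B·(x−a)·φ₀(x) + iA·(−iħφ₀′(x) − ηφ₀(x)) = 0`. -/
theorem stmt_4 (hbar a η : ℝ) (hhbar : 0 < hbar) (A B c : ℂ)
    (hAB : (starRingEnd ℂ) A * B + (starRingEnd ℂ) B * A = 2)
    (hc : c ^ 2 = A⁻¹) (φ : ℝ → ℂ)
    (hφ : ∀ x : ℝ, φ x =
      (Real.pi ^ (-(1/4 : ℝ)) : ℝ) * (hbar ^ (-(1/4 : ℝ)) : ℝ) * c *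
        Complex.exp (-B * ((x : ℂ) - a) ^ 2 / (2 * A * hbar) +
          Complex.I * η * ((x : ℂ) - a) / hbar)) :
    ∀ x : ℝ, B * ((x : ℂ) - a) * φ x +
      Complex.I * A * (-Complex.I * hbar * deriv φ x - η * φ x) = 0 := by
  have hA : A ≠ 0 := by rintro rfl; simp at hAB
  rw [show φ = wavePacket hbar a η A B _ from funext hφ]
  exact stmt_4_general a η B (ofReal_ne_zero.mpr hhbar.ne') hA _
end
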